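/- Let H be an infinite-dimensional complex Hilbert space, let a < b be real numbers, and let f : (a,b) → ℝ be a non-constant continuous function that is operator monotone on (a,b), i.e., for all selfadjoint A, B ∈ B(H) with spectra in (a,b), A ≤ B implies f(A) ≤ f(B). Then f is strictly operator monotone on (a,b): for all selfadjoint A, B ∈ B(H) with spectra in (a,b), if B ≤ A and A − B is invertible, then f(B) ≤ f(A) and f(A) − f(B) is invertible, i.e., f(B) < f(A). -/

import Mathlib

/-!
Suppose `f c = f d` for some `c < d`. Let `p` be a noncentral projection of a C⋆-algebra and `x` a
selfadjoint element that does not commute with `p`. Conjugating `p` by `exp (i t x)` with small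
`t ≠ 0` gives a projection `q ≠ p` as close to `p` as we like. For `y < z` the inequality
`c (1 - p) + y p ≤ d (1 - q) + z q` holds once `p` and `q` are close, since both coefficients
strictly increase. Applying `f` and cancelling the common value gives
`(f y - f c) p ≤ (f z - f c) q`; compressing it to the ranges of `1 - q` and `1 - p` yields
`f y ≤ f c ≤ f z`. Hence `f` is constant as soon as it is not strictly increasing. If `f` is
strictly increasing and `B + δ ≤ A` with `δ > 0`, then `f A - f B ≥ f (B + δ) - f B`, and the latter
is positive and invertible because `x ↦ f (x + δ) - f x` is positive on the spectrum of `B`.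
-/

open InnerProductSpace selfAdjoint Topology Unitary

section Definitions

variable (A : Type*) [CStarAlgebra A] [PartialOrder A]

/-- `f` is operator monotone on `J` with respect to the C⋆-algebra `A`: the functional calculus of
`f` preserves the order between selfadjoint elements of `A` with spectrum in `J`. -/
def OperatorMonotoneOn (f : ℝ → ℝ) (J : Set ℝ) : Prop :=
  ∀ S T : A, IsSelfAdjoint S → IsSelfAdjoint T → spectrum ℝ S ⊆ J → spectrum ℝ T ⊆ J →
    S ≤ T → cfc f S ≤ cfc f T

/-- `f` is strictly operator monotone on `J` with respect to the C⋆-algebra `A`: the functional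
calculus of `f` preserves the strict order between selfadjoint elements of `A` with spectrum in `J`,
where `T < S` means that `T ≤ S` and that `S - T` is invertible (which is stronger than the `<`
derived from `≤`). -/
def StrictOperatorMonotoneOn (f : ℝ → ℝ) (J : Set ℝ) : Prop :=
  ∀ S T : A, IsSelfAdjoint S → IsSelfAdjoint T → spectrum ℝ S ⊆ J → spectrum ℝ T ⊆ J →
    T ≤ S → IsUnit (S - T) → cfc f T ≤ cfc f S ∧ IsUnit (cfc f S - cfc f T)

end Definitions

section Projections

variable {A : Type*} [CStarAlgebra A] {p q : A}

theorem cfc_mul_one_sub_add_mul (hp : IsSelfAdjoint p) (c y : ℝ) :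
    cfc (fun t : ℝ => c * (1 - t) + y * t) p = c • (1 - p) + y • p := by
  rw [cfc_add .., cfc_const_mul .., cfc_const_mul .., cfc_sub .., cfc_const_one ℝ p, cfc_id' ℝ p]

theorem isSelfAdjoint_smul_one_sub_add_smul (hp : IsSelfAdjoint p) (c y : ℝ) :
    IsSelfAdjoint (c • (1 - p) + y • p) :=
  cfc_mul_one_sub_add_mul hp c y ▸ cfc_predicate _ p

theorem spectrum_smul_one_sub_add_smul_subset (hp : IsStarProjection p) (c y : ℝ) :
    spectrum ℝ (c • (1 - p) + y • p) ⊆ {c, y} := by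
  have := hp.isSelfAdjoint
  rw [← cfc_mul_one_sub_add_mul hp.isSelfAdjoint, cfc_map_spectrum _ p]
  rintro _ ⟨t, ht, rfl⟩
  rcases hp.isIdempotentElem.spectrum_subset ℝ ht with rfl | rfl <;> simp

theorem cfc_smul_one_sub_add_smul (hp : IsStarProjection p) (f : ℝ → ℝ) (c y : ℝ) :
    cfc f (c • (1 - p) + y • p) = f c • (1 - p) + f y • p := by
  have hsa := hp.isSelfAdjoint
  have hs : spectrum ℝ p ⊆ {0, 1} := hp.isIdempotentElem.spectrum_subset ℝ
  have hfin : (spectrum ℝ p).Finite := (Set.toFinite {0, 1}).subset hs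
  rw [← cfc_mul_one_sub_add_mul hsa, ← cfc_mul_one_sub_add_mul hsa,
    ← cfc_comp' f _ p ((hfin.image _).continuousOn _)]
  refine cfc_congr fun t ht => ?_
  rcases hs ht with rfl | rfl <;> simp

theorem exists_isSelfAdjoint_not_commute (hp : p ∉ Set.center A) :
    ∃ x : selfAdjoint A, ¬ Commute (x : A) p := by
  contrapose! hp
  refine Semigroup.mem_center_iff.2 fun a => ?_
  rw [← realPart_add_I_smul_imaginaryPart a]
  exact (hp (realPart a)).add_left ((hp (imaginaryPart a)).smul_left _)

theorem commute_of_commute_expUnitary {a : A} (ha : IsSelfAdjoint a) {x : selfAdjoint A}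
    (hx : ‖x‖ < Real.pi) (h : Commute (expUnitary x : A) a) : Commute (x : A) a := by
  rw [← argSelfAdjoint_expUnitary hx]
  exact h.cfc (by simpa only [ha.star_eq] using h.star_star) _

theorem exists_isStarProjection_ne_norm_sub_lt (hp : IsStarProjection p) (hpc : p ∉ Set.center A)
    {ε : ℝ} (hε : 0 < ε) : ∃ q : A, IsStarProjection q ∧ q ≠ p ∧ ‖q - p‖ < ε := by
  obtain ⟨x, hx⟩ := exists_isSelfAdjoint_not_commute hpc
  let q (t : ℝ) : A := conjStarAlgAut ℂ A (expUnitary (t • x)) p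
  have hcont : Continuous q := by
    have hu : Continuous fun t : ℝ => (expUnitary (t • x) : A) :=
      continuous_subtype_val.comp (continuous_expUnitary.comp (by fun_prop))
    exact (hu.mul_const p).mul hu.star
  have hnear : ∀ᶠ t in 𝓝 (0 : ℝ), ‖q t - p‖ < ε :=
    ((hcont.sub continuous_const).norm.tendsto' 0 0 (by simp [q])).eventually_lt_const hε
  have hsmall : ∀ᶠ t in 𝓝 (0 : ℝ), ‖t • x‖ < Real.pi :=
    (Continuous.tendsto' (by fun_prop) 0 0 (by simp)).eventually_lt_const Real.pi_pos
  obtain ⟨t, ⟨htε, htpi⟩, ht⟩ :=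
    ((hnear.and hsmall).filter_mono nhdsWithin_le_nhds |>.and self_mem_nhdsWithin).exists
      (f := 𝓝[≠] (0 : ℝ))
  refine ⟨q t, hp.map _, fun hqt => hx ?_, htε⟩
  have hcomm : Commute (expUnitary (t • x) : A) p := by
    simpa [q, mul_assoc, commute_iff_eq, -expUnitary_coe] using
      congr($hqt * (expUnitary (t • x) : A))
  simpa only [selfAdjoint.val_smul, Commute.smul_left_iff₀ ht] using
    commute_of_commute_expUnitary hp.isSelfAdjoint htpi hcomm

variable [PartialOrder A] [StarOrderedRing A]

theorem eq_of_le_of_norm_sub_lt_one (hp : IsStarProjection p) (hq : IsStarProjection q)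
    (hpq : p ≤ q) (h : ‖q - p‖ < 1) : q = p := by
  have hqp := (hp.le_iff_sub hq).1 hpq
  have hsq : ‖q - p‖ = ‖q - p‖ * ‖q - p‖ := by
    rw [← CStarRing.norm_star_mul_self, hqp.isSelfAdjoint.star_eq, hqp.isIdempotentElem.eq]
  rw [← sub_eq_zero, ← norm_eq_zero]
  nlinarith [norm_nonneg (q - p)]

theorem nonpos_of_smul_le_smul (hp : IsStarProjection p) (hq : IsStarProjection q) (hpq : ¬ p ≤ q)
    {k l : ℝ} (h : k • p ≤ l • q) : k ≤ 0 := by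
  by_contra! hk
  have hcompress : k • (star (p * (1 - q)) * (p * (1 - q))) ≤ 0 := by
    have hq' := hq.one_sub.isSelfAdjoint
    calc k • (star (p * (1 - q)) * (p * (1 - q))) = (1 - q) * (k • p) * (1 - q) := by
          rw [star_mul, hq'.star_eq, hp.isSelfAdjoint.star_eq, mul_assoc, ← mul_assoc p p,
            hp.isIdempotentElem.eq, mul_smul_comm, smul_mul_assoc, mul_assoc]
      _ ≤ (1 - q) * (l • q) * (1 - q) := hq'.conjugate_le_conjugate h
      _ = 0 := by rw [mul_assoc, smul_mul_assoc, hq.mul_one_sub_self, smul_zero, mul_zero]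
  have hzero : p * (1 - q) = 0 :=
    (CStarRing.star_mul_self_eq_zero_iff _).1
      ((le_of_smul_le_smul_left (by rwa [smul_zero]) hk).antisymm (star_mul_self_nonneg _))
  exact hpq ((hp.le_iff_mul_eq_left hq).2 (sub_eq_zero.1 (by rwa [mul_sub, mul_one] at hzero)).symm)

theorem smul_one_sub_add_smul_le (hp : IsStarProjection p) (hq : IsSelfAdjoint q) {c d y z : ℝ}
    (h : |z - d| * ‖q - p‖ ≤ min (d - c) (z - y)) :
    c • (1 - p) + y • p ≤ d • (1 - q) + z • q := by
  set m := min (d - c) (z - y)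
  have hperturb : -(m • 1) ≤ (z - d) • (q - p) := by
    have hsa : IsSelfAdjoint ((z - d) • (q - p)) :=
      (IsSelfAdjoint.all (z - d)).smul (hq.sub hp.isSelfAdjoint)
    calc -(m • 1 : A) ≤ -algebraMap ℝ A ‖(z - d) • (q - p)‖ := by
          rw [← Algebra.algebraMap_eq_smul_one, norm_smul, Real.norm_eq_abs]
          exact neg_le_neg (algebraMap_mono A h)
      _ ≤ (z - d) • (q - p) := hsa.neg_algebraMap_norm_le_self
  have hincrease : m • (1 : A) ≤ (d - c) • (1 - p) + (z - y) • p := by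
    calc m • (1 : A) = m • (1 - p) + m • p := by module
      _ ≤ (d - c) • (1 - p) + (z - y) • p :=
        add_le_add (smul_le_smul_of_nonneg_right (min_le_left _ _) hp.one_sub_nonneg)
          (smul_le_smul_of_nonneg_right (min_le_right _ _) hp.nonneg)
  calc c • (1 - p) + y • p ≤ c • (1 - p) + y • p + (m • 1 + -(m • 1)) := by simp
    _ ≤ c • (1 - p) + y • p + ((d - c) • (1 - p) + (z - y) • p + (z - d) • (q - p)) := by gcongr
    _ = d • (1 - q) + z • q := by module

end Projections

section StrictMonotonicity

variable {A : Type*} [CStarAlgebra A] [PartialOrder A] [StarOrderedRing A] {f : ℝ → ℝ} {J : Set ℝ}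

theorem OperatorMonotoneOn.monotoneOn [Nontrivial A] (hmono : OperatorMonotoneOn A f J) :
    MonotoneOn f J := by
  intro c hc d hd hcd
  have h := hmono (algebraMap ℝ A c) (algebraMap ℝ A d) (.algebraMap A (.all c))
    (.algebraMap A (.all d)) (by simpa using hc) (by simpa using hd) (algebraMap_mono A hcd)
  simpa only [cfc_algebraMap, algebraMap_le_algebraMap] using h

theorem OperatorMonotoneOn.le_and_le_of_eq (hmono : OperatorMonotoneOn A f J) {p : A}
    (hp : IsStarProjection p) (hpc : p ∉ Set.center A) {c d y z : ℝ} (hc : c ∈ J) (hd : d ∈ J)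
    (hy : y ∈ J) (hz : z ∈ J) (hcd : c < d) (hyz : y < z) (hfcd : f c = f d) :
    f y ≤ f c ∧ f c ≤ f z := by
  have : 0 < min (d - c) (z - y) := lt_min (sub_pos.2 hcd) (sub_pos.2 hyz)
  obtain ⟨q, hq, hqp, hnear⟩ := exists_isStarProjection_ne_norm_sub_lt hp hpc
    (ε := min 1 (min (d - c) (z - y) / (|z - d| + 1))) (by positivity)
  obtain ⟨hnear_one, hnear_gap⟩ := lt_min_iff.1 hnear
  have hle : c • (1 - p) + y • p ≤ d • (1 - q) + z • q := by
    refine smul_one_sub_add_smul_le hp hq.isSelfAdjoint ?_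
    rw [lt_div_iff₀ (by positivity)] at hnear_gap
    linarith [norm_nonneg (q - p)]
  have hcfc : f c • (1 - p) + f y • p ≤ f c • (1 - q) + f z • q := by
    have h := hmono _ _ (isSelfAdjoint_smul_one_sub_add_smul hp.isSelfAdjoint c y)
      (isSelfAdjoint_smul_one_sub_add_smul hq.isSelfAdjoint d z)
      ((spectrum_smul_one_sub_add_smul_subset hp c y).trans (Set.pair_subset hc hy))
      ((spectrum_smul_one_sub_add_smul_subset hq d z).trans (Set.pair_subset hd hz)) hle
    rwa [cfc_smul_one_sub_add_smul hp, cfc_smul_one_sub_add_smul hq, ← hfcd] at h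
  have hsmul : (f y - f c) • p ≤ (f z - f c) • q := by
    rw [← sub_nonneg] at hcfc ⊢
    convert hcfc using 1
    module
  have hsmul' : (f c - f z) • q ≤ (f c - f y) • p := by
    simpa only [← neg_smul, neg_sub] using neg_le_neg hsmul
  have hpq : ¬ p ≤ q := fun h => hqp (eq_of_le_of_norm_sub_lt_one hp hq h hnear_one)
  have hqp' : ¬ q ≤ p := fun h =>
    hqp (eq_of_le_of_norm_sub_lt_one hq hp h (norm_sub_rev q p ▸ hnear_one)).symm
  exact ⟨sub_nonpos.1 (nonpos_of_smul_le_smul hp hq hpq hsmul),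
    sub_nonpos.1 (nonpos_of_smul_le_smul hq hp hqp' hsmul')⟩

theorem OperatorMonotoneOn.eqOn_const_of_eq (hmono : OperatorMonotoneOn A f J) {p : A}
    (hp : IsStarProjection p) (hpc : p ∉ Set.center A) (hJ : J.OrdConnected)
    (hf : ContinuousOn f J) {c d : ℝ} (hc : c ∈ J) (hd : d ∈ J) (hcd : c < d) (hfcd : f c = f d) :
    Set.EqOn f (fun _ => f c) J := by
  have hinterior : Set.EqOn f (fun _ => f c) (interior J) := by
    intro t ht
    obtain ⟨y, z, ⟨hyt, htz⟩, hyz⟩ := mem_nhds_iff_exists_Ioo_subset.1 (isOpen_interior.mem_nhds ht)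
    obtain ⟨s, hs⟩ := exists_between hyt
    obtain ⟨r, hr⟩ := exists_between htz
    have hsJ : s ∈ J := interior_subset (hyz ⟨hs.1, hs.2.trans htz⟩)
    have hrJ : r ∈ J := interior_subset (hyz ⟨hyt.trans hr.1, hr.2⟩)
    have htJ : t ∈ J := interior_subset ht
    exact le_antisymm (hmono.le_and_le_of_eq hp hpc hc hd htJ hrJ hcd hr.1 hfcd).1
      (hmono.le_and_le_of_eq hp hpc hc hd hsJ htJ hcd hs.2 hfcd).2
  have hne : (interior J).Nonempty :=
    (Set.nonempty_Ioo.2 hcd).mono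
      (interior_maximal (Set.Ioo_subset_Icc_self.trans (hJ.out hc hd)) isOpen_Ioo)
  refine hinterior.of_subset_closure hf continuousOn_const interior_subset ?_
  rw [(hJ.convex (𝕜 := ℝ)).closure_interior_eq_closure_of_nonempty_interior hne]
  exact subset_closure

theorem OperatorMonotoneOn.strictMonoOn (hmono : OperatorMonotoneOn A f J) {p : A}
    (hp : IsStarProjection p) (hpc : p ∉ Set.center A) (hJ : J.OrdConnected)
    (hf : ContinuousOn f J) (hnc : ∃ x ∈ J, ∃ y ∈ J, f x ≠ f y) : StrictMonoOn f J := by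
  have : Nontrivial A := nontrivial_of_ne 0 p fun h => hpc (h ▸ Set.zero_mem_center)
  intro c hc d hd hcd
  refine (hmono.monotoneOn hc hd hcd.le).lt_of_ne fun hfcd => ?_
  have hconst := hmono.eqOn_const_of_eq hp hpc hJ hf hc hd hcd hfcd
  obtain ⟨x, hx, y, hy, hxy⟩ := hnc
  exact hxy ((hconst hx).trans (hconst hy).symm)

end StrictMonotonicity

section Shift

variable {A : Type*} [CStarAlgebra A] {f : ℝ → ℝ} {J : Set ℝ} {S T : A} {δ : ℝ}

theorem cfc_add_const_eq_add_algebraMap (hT : IsSelfAdjoint T) (δ : ℝ) :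
    cfc (fun x : ℝ => x + δ) T = T + algebraMap ℝ A δ := by
  rw [cfc_add_const δ (fun x => x) T, cfc_id' ℝ T]

variable [PartialOrder A] [StarOrderedRing A]

theorem exists_mem_spectrum_add_le (hS : IsSelfAdjoint S) (hT : IsSelfAdjoint T)
    (hle : T + algebraMap ℝ A δ ≤ S) {x : ℝ} (hx : x ∈ spectrum ℝ T) :
    ∃ y ∈ spectrum ℝ S, x + δ ≤ y := by
  have : Nontrivial A := not_subsingleton_iff_nontrivial.1 fun _ => by
    simp [spectrum.of_subsingleton] at hx
  obtain ⟨M, hM, hMmax⟩ := (spectrum.isCompact (𝕜 := ℝ) S).exists_isGreatest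
    (ContinuousFunctionalCalculus.spectrum_nonempty S hS)
  have h := hle.trans (le_algebraMap_of_spectrum_le fun y hy => hMmax hy)
  rw [← cfc_add_const_eq_add_algebraMap hT, cfc_le_algebraMap_iff _ M T] at h
  exact ⟨M, hM, h x hx⟩

theorem isStrictlyPositive_cfc_add_algebraMap_sub_cfc (hf : ContinuousOn f J)
    (hstrict : StrictMonoOn f J) (hT : IsSelfAdjoint T) (hTJ : spectrum ℝ T ⊆ J) (hδ : 0 < δ)
    (hTδ : Set.MapsTo (fun x => x + δ) (spectrum ℝ T) J) :
    IsStrictlyPositive (cfc f (T + algebraMap ℝ A δ) - cfc f T) := by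
  have := hf.mono hTJ
  have : ContinuousOn (fun x => f (x + δ)) (spectrum ℝ T) := hf.comp (by fun_prop) hTδ
  rw [← cfc_add_const_eq_add_algebraMap hT,
    ← cfc_comp' f (fun x => x + δ) T (hf.mono hTδ.image_subset), ← cfc_sub ..,
    cfc_isStrictlyPositive_iff _ T]
  exact fun x hx => sub_pos.2 (hstrict (hTJ hx) (hTδ hx) (lt_add_of_pos_right x hδ))

theorem OperatorMonotoneOn.strictOperatorMonotoneOn (hmono : OperatorMonotoneOn A f J)
    (hJ : J.OrdConnected) (hf : ContinuousOn f J) (hstrict : StrictMonoOn f J) :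
    StrictOperatorMonotoneOn A f J := by
  refine fun S T hS hT hSJ hTJ hTS hunit => ⟨hmono T S hT hS hTJ hSJ hTS, ?_⟩
  nontriviality A
  have hpos := hunit.isStrictlyPositive (sub_nonneg.2 hTS)
  obtain ⟨δ, hδ, hδle⟩ :=
    (CFC.exists_pos_algebraMap_le_iff (hS.sub hT)).2 fun x hx => hpos.spectrum_pos hx
  have hle : T + algebraMap ℝ A δ ≤ S := le_sub_iff_add_le'.1 hδle
  have hTδ : Set.MapsTo (fun x => x + δ) (spectrum ℝ T) J := fun x hx => by
    obtain ⟨y, hy, hxy⟩ := exists_mem_spectrum_add_le hS hT hle hx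
    exact hJ.out (hTJ hx) (hSJ hy) ⟨le_add_of_nonneg_right hδ.le, hxy⟩
  have hTδJ : spectrum ℝ (T + algebraMap ℝ A δ) ⊆ J := by
    rw [← cfc_add_const_eq_add_algebraMap hT, cfc_map_spectrum _ T]
    exact hTδ.image_subset
  have hcfc : cfc f (T + algebraMap ℝ A δ) ≤ cfc f S :=
    hmono _ S (hT.add (.algebraMap A (.all δ))) hS hTδJ hSJ hle
  exact ((isStrictlyPositive_cfc_add_algebraMap_sub_cfc hf hstrict hT hTJ hδ hTδ).of_le
    (sub_le_sub_right hcfc _)).isUnit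

end Shift

theorem rankOne_self_notMem_center {𝕜 E : Type*} [RCLike 𝕜] [NormedAddCommGroup E]
    [InnerProductSpace 𝕜 E] (h : 1 < Module.rank 𝕜 E) {u : E} (hu : u ≠ 0) :
    rankOne 𝕜 u u ∉ Set.center (E →L[𝕜] E) := by
  intro hcenter
  obtain ⟨c, hc⟩ := Algebra.mem_bot.1 (Algebra.IsCentral.out (K := 𝕜) hcenter)
  have happly (x : E) : c • x = inner 𝕜 u x • u := by
    simpa [Algebra.algebraMap_eq_smul_one] using congr($hc x)
  have hc0 : c ≠ 0 := by
    rintro rfl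
    simpa [hu] using (happly u).symm
  exact h.not_ge (rank_le_one_iff.2 ⟨u, fun x => ⟨c⁻¹ * inner 𝕜 u x, by
    rw [mul_smul, ← happly, inv_smul_smul₀ hc0]⟩⟩)

theorem exists_isStarProjection_notMem_center {𝕜 E : Type*} [RCLike 𝕜] [NormedAddCommGroup E]
    [InnerProductSpace 𝕜 E] [CompleteSpace E] (h : 1 < Module.rank 𝕜 E) :
    ∃ p : E →L[𝕜] E, IsStarProjection p ∧ p ∉ Set.center (E →L[𝕜] E) := by
  have : Nontrivial E := rank_pos_iff_nontrivial.1 (zero_lt_one.trans h)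
  obtain ⟨x, hx⟩ := exists_ne (0 : E)
  have hunit : ‖(‖x‖ : 𝕜)⁻¹ • x‖ = 1 := norm_smul_inv_norm hx
  exact ⟨_, isStarProjection_rankOne_self hunit,
    rankOne_self_notMem_center h (norm_ne_zero_iff.1 (hunit ▸ one_ne_zero))⟩

theorem stmt13_general {A : Type*} [CStarAlgebra A] [PartialOrder A] [StarOrderedRing A]
    (hproj : ∃ p : A, IsStarProjection p ∧ p ∉ Set.center A) {J : Set ℝ} (hJ : J.OrdConnected)
    {f : ℝ → ℝ} (hf : ContinuousOn f J) (hmono : OperatorMonotoneOn A f J)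
    (hnc : ∃ x ∈ J, ∃ y ∈ J, f x ≠ f y) : StrictOperatorMonotoneOn A f J := by
  obtain ⟨p, hp, hpc⟩ := hproj
  exact hmono.strictOperatorMonotoneOn hJ hf (hmono.strictMonoOn hp hpc hJ hf hnc)

/-- any non-constant operator monotone function on a bounded interval
`(a, b)` is strictly operator monotone on `(a, b)` (operators on an
infinite-dimensional complex Hilbert space). -/
theorem stmt13 {H : Type*} [NormedAddCommGroup H] [InnerProductSpace ℂ H] [CompleteSpace H]
    (hinf : ¬ FiniteDimensional ℂ H) (a b : ℝ) (hab : a < b)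
    (f : ℝ → ℝ) (hf : ContinuousOn f (Set.Ioo a b))
    (hmono : ∀ A B : H →L[ℂ] H, IsSelfAdjoint A → IsSelfAdjoint B →
      spectrum ℝ A ⊆ Set.Ioo a b → spectrum ℝ B ⊆ Set.Ioo a b →
      A ≤ B → cfc f A ≤ cfc f B)
    (hnc : ∃ x ∈ Set.Ioo a b, ∃ y ∈ Set.Ioo a b, f x ≠ f y) :
    ∀ A B : H →L[ℂ] H, IsSelfAdjoint A → IsSelfAdjoint B →
      spectrum ℝ A ⊆ Set.Ioo a b → spectrum ℝ B ⊆ Set.Ioo a b →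
      B ≤ A → IsUnit (A - B) →
      cfc f B ≤ cfc f A ∧ IsUnit (cfc f A - cfc f B) := by
  have hrank : 1 < Module.rank ℂ H :=
    Cardinal.one_lt_aleph0.trans_le (not_lt.1 (mt Module.rank_lt_aleph0_iff.1 hinf))
  exact stmt13_general (exists_isStarProjection_notMem_center hrank) Set.ordConnected_Ioo hf
    hmono hnc
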